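/- arXiv:2209.03852 — 2 statements merged into one kernel-verified Lean document; each statement's English description precedes it below -/
import Mathlib

section
/- Let H²_β be the weighted Hardy space induced by a weight sequence w = (w_k)_{k≥1} with w_k → 1, and let ψ be analytic on an open neighborhood of the closed unit disk with ψ(𝔻) ⊆ 𝔻. Define β̃ = (β̃_n)_{n≥0} by β̃_n = (n+1)β_n. If the composition operator C_ψ is bounded on H²_β, then C_ψ is bounded on H²_{β̃}. Moreover, if the derivative ψ' has no zero on the unit circle ∂𝔻, then conversely boundedness of C_ψ on H²_{β̃} implies boundedness of C_ψ on H²_β. -/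
noncomputable section

open Complex Filter Topology

/-- The sequence-space (ℓ²) model of a weighted Hardy space `H²_β`.
An element `a : H2` represents the analytic function whose `k`-th Taylor
coefficient is `a k / β k` (so that `‖a‖` is exactly the `H²_β`-norm). -/
abbrev H2 : Type := lp (fun _ : ℕ => ℂ) 2

/-- The direct sum (ℓ²-sense) of `m` copies of `H2`. -/
abbrev Hm (m : ℕ) : Type := PiLp 2 (fun _ : Fin m => H2)

/-- The open unit disk 𝔻 ⊆ ℂ. -/
def unitDisk : Set ℂ := Metric.ball 0 1

/-- `β_0 = 1` and `β_k = ∏_{j=1}^k w_j`. -/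
def betaSeq (w : ℕ → ℝ) (k : ℕ) : ℝ := ∏ j ∈ Finset.Icc 1 k, w j

/-- The analytic function on 𝔻 represented by the vector `a` in the model of `H²_β`:
`f(z) = ∑_k (a k / β k) z^k`. -/
def repFun (β : ℕ → ℝ) (a : H2) (z : ℂ) : ℂ := ∑' k, (a k / (β k : ℂ)) * z ^ k

/-- `T` is (the ℓ²-model of) the multiplication operator `M_g` on `H²_β`.
Existence of such a `T` says precisely that `M_g` is bounded on `H²_β`. -/
def RepMul (β : ℕ → ℝ) (g : ℂ → ℂ) (T : H2 →L[ℂ] H2) : Prop :=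
  ∀ a : H2, ∀ z ∈ unitDisk, repFun β (T a) z = g z * repFun β a z

/-- `T` is (the ℓ²-model of) the composition operator `C_ψ` on `H²_β`.
Existence of such a `T` says precisely that `C_ψ` is bounded on `H²_β`. -/
def RepComp (β : ℕ → ℝ) (ψ : ℂ → ℂ) (T : H2 →L[ℂ] H2) : Prop :=
  ∀ a : H2, ∀ z ∈ unitDisk, repFun β (T a) z = repFun β a (ψ z)

/-- The Möbius factor `φ_{z₀}(z) = (z₀ - z)/(1 - conj z₀ · z)`. -/
def mobius (z₀ z : ℂ) : ℂ := (z₀ - z) / (1 - (starRingEnd ℂ) z₀ * z)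

/-- `φ` belongs to `Aut(𝔻)`, i.e. `φ(z) = e^{iθ}(z₀ - z)/(1 - conj z₀ · z)`. -/
def IsDiskAut (φ : ℂ → ℂ) : Prop :=
  ∃ (θ : ℝ) (z₀ : ℂ), z₀ ∈ unitDisk ∧
    ∀ z, φ z = Complex.exp (θ * Complex.I) * mobius z₀ z

/-- `B` is a finite Blaschke product of order `m`. -/
def IsBlaschke (m : ℕ) (B : ℂ → ℂ) : Prop :=
  ∃ (θ : ℝ) (zs : Fin m → ℂ), (∀ j, zs j ∈ unitDisk) ∧
    ∀ z, B z = Complex.exp (θ * Complex.I) * ∏ j, mobius (zs j) z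

/-- `w` is a positive weight sequence tending to `1` such that the weighted Hardy
space `H²_β` is of polynomial growth: `sup_k (k+1)|w_k - 1| < ∞`. -/
def PolyGrowth (w : ℕ → ℝ) : Prop :=
  (∀ k, 1 ≤ k → 0 < w k) ∧ Tendsto w atTop (nhds 1) ∧
    ∃ M : ℝ, ∀ k : ℕ, 1 ≤ k → ((k : ℝ) + 1) * |w k - 1| ≤ M

/-- `f` is analytic on an open neighbourhood of the closed unit disk. -/
def AnalyticOnClosedDisk (f : ℂ → ℂ) : Prop :=
  ∃ U : Set ℂ, IsOpen U ∧ Metric.closedBall (0:ℂ) 1 ⊆ U ∧ AnalyticOnNhd ℂ f U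

/-!
For a holomorphic `f` on the disk, `f ∈ H²_β̃` if and only if `f' ∈ H²_β`, and the chain rule gives
`(f ∘ ψ)' = ψ' · (f' ∘ ψ)`. Boundedness of `C_ψ` on one of the two spaces therefore passes to the
other as soon as `H²_β` is stable under multiplication, respectively division, by `ψ'`.

Both are instances of one fact: if `u` is analytic near the unit circle only, `F ∈ H²_β`, and the
holomorphic function `f` agrees with `u F` on the part of the disk close to the circle, then
`f ∈ H²_β`. On Taylor coefficients `F ↦ f` is convolution with the Laurent coefficients of `u`,
which decay geometrically in both directions, while `β` varies subexponentially, so Schur's test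
applies. Division by `ψ'` is the case `u = 1/ψ'`: zeros of `ψ'` inside the disk do no harm.
Finally, by the closed graph theorem, `C_ψ` is bounded as soon as it maps the space to itself.
-/

section SlowVariation

lemma exists_dist_le_add_mul_sub {α : Type*} [PseudoMetricSpace α] {f : ℕ → α}
    (hf : Tendsto (fun k => dist (f k) (f (k + 1))) atTop (𝓝 0)) {ε : ℝ} (hε : 0 < ε) :
    ∃ D, ∀ m n, m ≤ n → dist (f m) (f n) ≤ D + ε * ((n : ℝ) - m) := by
  obtain ⟨N, hN⟩ := eventually_atTop.mp (hf.eventually_le_const hε)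
  refine ⟨∑ k ∈ Finset.range N, dist (f k) (f (k + 1)), fun m n hmn => ?_⟩
  have hsplit : ∀ k, dist (f k) (f (k + 1)) ≤
      (if k < N then dist (f k) (f (k + 1)) else 0) + ε := fun k => by
    split_ifs with hk
    · exact le_add_of_nonneg_right hε.le
    · simpa only [zero_add] using hN k (not_lt.mp hk)
  calc dist (f m) (f n)
      ≤ ∑ k ∈ Finset.Ico m n, dist (f k) (f (k + 1)) := dist_le_Ico_sum_dist f hmn
    _ ≤ ∑ k ∈ Finset.Ico m n, ((if k < N then dist (f k) (f (k + 1)) else 0) + ε) :=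
        Finset.sum_le_sum fun k _ => hsplit k
    _ = ∑ k ∈ Finset.Ico m n with k < N, dist (f k) (f (k + 1)) + ε * ((n : ℝ) - m) := by
        rw [Finset.sum_add_distrib, Finset.sum_filter, Finset.sum_const, Nat.card_Ico,
          nsmul_eq_mul, Nat.cast_sub hmn, mul_comm ε]
    _ ≤ ∑ k ∈ Finset.range N, dist (f k) (f (k + 1)) + ε * ((n : ℝ) - m) := by
        gcongr
        exact fun k hk => Finset.mem_range.mpr (Finset.mem_filter.mp hk).2

/-- A positive sequence whose consecutive quotients tend to `1`. These are the weights `β` for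
which `H²_β` is a space of functions on the disk that, like `H²`, is stable under multiplication
by functions analytic near the closed disk. -/
structure IsRegularWeight (β : ℕ → ℝ) : Prop where
  pos : ∀ k, 0 < β k
  tendsto_ratio : Tendsto (fun k => β (k + 1) / β k) atTop (𝓝 1)

lemma betaSeq_succ (w : ℕ → ℝ) (k : ℕ) : betaSeq w (k + 1) = betaSeq w k * w (k + 1) :=
  Finset.prod_Icc_succ_top (Nat.le_add_left 1 k) w

lemma isRegularWeight_betaSeq {w : ℕ → ℝ} (hpos : ∀ k, 1 ≤ k → 0 < w k)
    (hlim : Tendsto w atTop (𝓝 1)) : IsRegularWeight (betaSeq w) := by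
  have hβ : ∀ k, 0 < betaSeq w k := fun k =>
    Finset.prod_pos fun j hj => hpos j (Finset.mem_Icc.mp hj).1
  refine ⟨hβ, (hlim.comp (tendsto_add_atTop_nat 1)).congr fun k => ?_⟩
  rw [betaSeq_succ, mul_div_cancel_left₀ _ (hβ k).ne', Function.comp_apply]

namespace IsRegularWeight

variable {β : ℕ → ℝ}

lemma succ_mul (hβ : IsRegularWeight β) : IsRegularWeight fun n => ((n : ℝ) + 1) * β n where
  pos k := mul_pos k.cast_add_one_pos (hβ.pos k)
  tendsto_ratio := by
    have hratio : Tendsto (fun k : ℕ => ((k + 1 : ℕ) + 1 : ℝ) / ((k : ℝ) + 1)) atTop (𝓝 1) := by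
      have h := tendsto_add_mul_div_add_mul_atTop_nhds (2 : ℝ) 1 1 one_ne_zero
      rw [div_one] at h
      refine h.congr fun k => ?_
      push_cast
      ring
    simpa only [mul_div_mul_comm, mul_one] using hratio.mul hβ.tendsto_ratio

lemma tendsto_dist_log (hβ : IsRegularWeight β) :
    Tendsto (fun k => dist (Real.log (β k)) (Real.log (β (k + 1)))) atTop (𝓝 0) := by
  have h := (hβ.tendsto_ratio.log one_ne_zero).abs
  rw [Real.log_one, abs_zero] at h
  refine h.congr fun k => ?_
  rw [Real.log_div (hβ.pos _).ne' (hβ.pos _).ne', dist_comm, Real.dist_eq]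

lemma exists_le_mul_pow_natAbs (hβ : IsRegularWeight β) {q : ℝ} (hq : 1 < q) :
    ∃ D, 0 < D ∧ ∀ m n : ℕ, β n ≤ D * q ^ ((n : ℤ) - m).natAbs * β m := by
  obtain ⟨D, hD⟩ := exists_dist_le_add_mul_sub hβ.tendsto_dist_log (Real.log_pos hq)
  have hdist : ∀ m n : ℕ, dist (Real.log (β m)) (Real.log (β n)) ≤
      D + Real.log q * ((n : ℤ) - m).natAbs := fun m n => by
    rw [Nat.cast_natAbs, Int.cast_abs, Int.cast_sub, Int.cast_natCast, Int.cast_natCast]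
    rcases le_total m n with hmn | hnm
    · simpa only [abs_of_nonneg (sub_nonneg.mpr (Nat.cast_le (α := ℝ).mpr hmn))] using hD m n hmn
    · rw [abs_sub_comm, dist_comm]
      simpa only [abs_of_nonneg (sub_nonneg.mpr (Nat.cast_le (α := ℝ).mpr hnm))] using hD n m hnm
  refine ⟨Real.exp D, Real.exp_pos D, fun m n => ?_⟩
  have : 0 < q := one_pos.trans hq
  have hm := hβ.pos m
  rw [← Real.log_le_log_iff (hβ.pos n) (by positivity),
    Real.log_mul (by positivity) hm.ne', Real.log_mul (by positivity) (by positivity),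
    Real.log_exp, Real.log_pow]
  have h := (Real.dist_eq _ _).symm.trans_le (hdist m n)
  linarith [neg_abs_le (Real.log (β m) - Real.log (β n))]

lemma summable_pow_div_sq (hβ : IsRegularWeight β) {r : ℝ} (hr0 : 0 ≤ r) (hr1 : r < 1) :
    Summable fun k => (r ^ k / β k) ^ 2 := by
  rcases hr0.eq_or_lt with rfl | hr0
  · refine summable_of_ne_finset_zero (s := {0}) fun k hk => ?_
    rw [zero_pow (Finset.notMem_singleton.mp hk), zero_div, zero_pow two_ne_zero]
  have hpos : ∀ k, 0 < (r ^ k / β k) ^ 2 := fun k => by have := hβ.pos k; positivity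
  refine summable_of_ratio_test_tendsto_lt_one (pow_lt_one₀ hr0.le hr1 two_ne_zero)
    (Eventually.of_forall fun k => (hpos k).ne') ?_
  have h := ((hβ.tendsto_ratio.inv₀ one_ne_zero).const_mul r).pow 2
  rw [inv_one, mul_one] at h
  refine h.congr fun k => ?_
  have := hβ.pos k
  have := hβ.pos (k + 1)
  rw [Real.norm_of_nonneg (hpos _).le, Real.norm_of_nonneg (hpos _).le]
  field_simp
  ring

end IsRegularWeight

end SlowVariation

section Schur

open scoped ENNReal

lemma sq_tsum_mul_le_tsum_mul_tsum_mul_sq {ι : Type*} (w x : ι → ℝ≥0∞) :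
    (∑' i, w i * x i) ^ 2 ≤ (∑' i, w i) * ∑' i, w i * x i ^ 2 := by
  rw [ENNReal.tsum_eq_iSup_sum, ENNReal.iSup_pow]
  refine iSup_le fun s => ?_
  have h := ENNReal.inner_le_weight_mul_Lp_of_nonneg s one_le_two w x
  have hhalf : (1 : ℝ) - 2⁻¹ = 2⁻¹ := by norm_num
  rw [hhalf, ← ENNReal.mul_rpow_of_nonneg _ _ (by norm_num), ENNReal.le_rpow_inv_iff two_pos,
    ENNReal.rpow_two] at h
  simp only [ENNReal.rpow_two] at h
  exact h.trans (mul_le_mul' (ENNReal.sum_le_tsum s) (ENNReal.sum_le_tsum s))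

lemma tsum_sq_tsum_mul_le {ι κ : Type*} {K : ι → κ → ℝ≥0∞} {A B : ℝ≥0∞}
    (hrow : ∀ n, ∑' m, K n m ≤ A) (hcol : ∀ m, ∑' n, K n m ≤ B) (x : κ → ℝ≥0∞) :
    ∑' n, (∑' m, K n m * x m) ^ 2 ≤ A * (B * ∑' m, x m ^ 2) :=
  calc ∑' n, (∑' m, K n m * x m) ^ 2
      ≤ ∑' n, A * ∑' m, K n m * x m ^ 2 := ENNReal.tsum_le_tsum fun n =>
        (sq_tsum_mul_le_tsum_mul_tsum_mul_sq (K n) x).trans (mul_le_mul_left (hrow n) _)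
    _ = A * ∑' m, (∑' n, K n m) * x m ^ 2 := by
        simp only [ENNReal.tsum_mul_left, ENNReal.tsum_comm (α := ι), ENNReal.tsum_mul_right]
    _ ≤ A * (B * ∑' m, x m ^ 2) := by
        rw [← ENNReal.tsum_mul_left (a := B)]
        exact mul_le_mul_right (ENNReal.tsum_le_tsum fun m => mul_le_mul_left (hcol m) _) _

lemma summable_norm_sq_iff_tsum_enorm_sq_ne_top {ι E : Type*} [SeminormedAddCommGroup E]
    {a : ι → E} : Summable (fun i => ‖a i‖ ^ 2) ↔ ∑' i, ‖a i‖ₑ ^ 2 ≠ ∞ := by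
  have h := tsum_enorm_ne_top_iff_summable_norm (f := fun i => ‖a i‖ ^ 2)
  simp_rw [enorm_pow, enorm_norm, norm_pow, norm_norm] at h
  exact h.symm

lemma summable_norm_sq_of_enorm_le_conv {E F : Type*} [SeminormedAddCommGroup E]
    [SeminormedAddCommGroup F] {k : ℤ → ℝ≥0∞} (hk : ∑' j, k j ≠ ∞) {a : ℕ → E} {b : ℕ → F}
    (hab : ∀ n : ℕ, ‖a n‖ₑ ≤ ∑' m : ℕ, k (n - m) * ‖b m‖ₑ)
    (hb : Summable fun m => ‖b m‖ ^ 2) : Summable fun n => ‖a n‖ ^ 2 := by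
  rw [summable_norm_sq_iff_tsum_enorm_sq_ne_top] at hb ⊢
  have hrow : ∀ n : ℕ, ∑' m : ℕ, k (n - m) ≤ ∑' j, k j := fun n =>
    ENNReal.tsum_comp_le_tsum_of_injective (sub_right_injective.comp Nat.cast_injective) k
  have hcol : ∀ m : ℕ, ∑' n : ℕ, k (n - m) ≤ ∑' j, k j := fun m =>
    ENNReal.tsum_comp_le_tsum_of_injective (sub_left_injective.comp Nat.cast_injective) k
  exact ne_top_of_le_ne_top (ENNReal.mul_ne_top hk (ENNReal.mul_ne_top hk hb)) <|
    (ENNReal.tsum_le_tsum fun n => pow_le_pow_left₀ zero_le (hab n) 2).trans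
      (tsum_sq_tsum_mul_le hrow hcol _)

lemma summable_pow_natAbs {r : ℝ} (hr0 : 0 ≤ r) (hr1 : r < 1) :
    Summable fun k : ℤ => r ^ k.natAbs := by
  have h := summable_geometric_of_lt_one hr0 hr1
  exact Summable.of_nat_of_neg (by simpa only [Int.natAbs_natCast] using h)
    (by simpa only [Int.natAbs_neg, Int.natAbs_natCast] using h)

lemma IsRegularWeight.summable_sq_of_hasSum_conv {β : ℕ → ℝ} (hβ : IsRegularWeight β)
    {c : ℤ → ℂ} {M r : ℝ} (hr0 : 0 ≤ r) (hr1 : r < 1) (hc : ∀ k, ‖c k‖ ≤ M * r ^ k.natAbs)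
    {a b : ℕ → ℂ} (hab : ∀ n : ℕ, HasSum (fun m : ℕ => c (n - m) * b m) (a n))
    (hb : Summable fun m => (‖b m‖ * β m) ^ 2) : Summable fun n => (‖a n‖ * β n) ^ 2 := by
  have hnorm : ∀ (x : ℕ → ℂ) (k : ℕ), ‖x k‖ * β k = ‖x k * (β k : ℂ)‖ := fun x k => by
    rw [norm_mul, Complex.norm_of_nonneg (hβ.pos k).le]
  simp only [hnorm] at hb ⊢
  -- The decay rate `r` of `c` has to beat the growth rate `q` of `β`.
  obtain ⟨q, hq1, hrq⟩ : ∃ q, 1 < q ∧ r * q < 1 := by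
    refine ⟨2 / (1 + r), by rw [lt_div_iff₀] <;> linarith, ?_⟩
    rw [← mul_div_assoc, div_lt_one] <;> linarith
  obtain ⟨D, hD0, hD⟩ := hβ.exists_le_mul_pow_natAbs hq1
  have hM : 0 ≤ M := by
    simpa only [Int.natAbs_zero, pow_zero, mul_one] using (norm_nonneg _).trans (hc 0)
  set k : ℤ → ℝ≥0∞ := fun j => ENNReal.ofReal (M * D * (r * q) ^ j.natAbs)
  have hk : ∑' j, k j ≠ ∞ :=
    ((summable_pow_natAbs (by positivity) hrq).mul_left (M * D)).tsum_ofReal_ne_top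
  refine summable_norm_sq_of_enorm_le_conv hk (fun n => ?_) hb
  rw [← (hab n).tsum_eq, ← tsum_mul_right]
  refine enorm_tsum_le_tsum_enorm.trans (ENNReal.tsum_le_tsum fun m => ?_)
  rw [← ofReal_norm, ← ofReal_norm, ← ENNReal.ofReal_mul (by positivity)]
  refine ENNReal.ofReal_le_ofReal ?_
  have hβn := (hβ.pos n).le
  rw [norm_mul, norm_mul, norm_mul, Complex.norm_of_nonneg hβn,
    Complex.norm_of_nonneg (hβ.pos m).le]
  calc ‖c (n - m)‖ * ‖b m‖ * β n
      ≤ M * r ^ ((n : ℤ) - m).natAbs * ‖b m‖ * (D * q ^ ((n : ℤ) - m).natAbs * β m) := by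
        gcongr
        · exact hc _
        · exact hD m n
    _ = M * D * (r * q) ^ ((n : ℤ) - m).natAbs * (‖b m‖ * β m) := by
        rw [mul_pow]
        ring

end Schur

section TaylorCoeff

/-- The `n`-th Taylor coefficient of `f` at the origin. -/
def taylorCoeff (f : ℂ → ℂ) (n : ℕ) : ℂ := (n.factorial : ℂ)⁻¹ * iteratedDeriv n f 0

lemma isOpen_unitDisk : IsOpen unitDisk := Metric.isOpen_ball

lemma mem_unitDisk {z : ℂ} : z ∈ unitDisk ↔ ‖z‖ < 1 := mem_ball_zero_iff

lemma taylorCoeff_congr {f g : ℂ → ℂ} (h : Set.EqOn f g unitDisk) (n : ℕ) :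
    taylorCoeff f n = taylorCoeff g n := by
  rw [taylorCoeff, taylorCoeff,
    (h.eventuallyEq_of_mem (Metric.ball_mem_nhds 0 one_pos)).iteratedDeriv_eq]

lemma taylorCoeff_deriv (f : ℂ → ℂ) (n : ℕ) :
    taylorCoeff (deriv f) n = (n + 1) * taylorCoeff f (n + 1) := by
  have : (n : ℂ) + 1 ≠ 0 := n.cast_add_one_ne_zero
  rw [taylorCoeff, taylorCoeff, iteratedDeriv_succ', Nat.factorial_succ]
  push_cast
  field_simp

lemma hasSum_taylorCoeff {f : ℂ → ℂ} (hf : DifferentiableOn ℂ f unitDisk) {z : ℂ}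
    (hz : z ∈ unitDisk) : HasSum (fun n => taylorCoeff f n * z ^ n) (f z) := by
  refine (Complex.hasSum_taylorSeries_on_ball hf hz).congr_fun fun n => ?_
  rw [taylorCoeff, sub_zero, smul_eq_mul, smul_eq_mul]
  ring

lemma hasFPowerSeriesOnBall_of_hasSum {f : ℂ → ℂ} {c : ℕ → ℂ}
    (h : ∀ z ∈ unitDisk, HasSum (fun n => c n * z ^ n) (f z)) :
    HasFPowerSeriesOnBall f (FormalMultilinearSeries.ofScalars ℂ c) 0 1 where
  r_le := by
    refine ENNReal.le_of_forall_nnreal_lt fun r hr => ?_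
    have hr' : (r : ℂ) ∈ unitDisk := by simpa [mem_unitDisk] using hr
    refine FormalMultilinearSeries.le_radius_of_summable _
      ((h r hr').summable.norm.congr fun n => ?_)
    rw [FormalMultilinearSeries.ofScalars_norm]
    simp
  r_pos := one_pos
  hasSum {y} hy := by
    have hy' : y ∈ unitDisk := by simpa [mem_unitDisk, ← ofReal_norm] using hy
    simpa [FormalMultilinearSeries.ofScalars_apply_eq, mul_comm] using h y hy'

lemma differentiableOn_of_hasSum {f : ℂ → ℂ} {c : ℕ → ℂ}
    (h : ∀ z ∈ unitDisk, HasSum (fun n => c n * z ^ n) (f z)) :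
    DifferentiableOn ℂ f unitDisk := by
  rw [unitDisk, ← Metric.eball_ofReal, ENNReal.ofReal_one]
  exact (hasFPowerSeriesOnBall_of_hasSum h).differentiableOn

lemma taylorCoeff_of_hasSum {f : ℂ → ℂ} {c : ℕ → ℂ}
    (h : ∀ z ∈ unitDisk, HasSum (fun n => c n * z ^ n) (f z)) (n : ℕ) : taylorCoeff f n = c n := by
  have hsmul := (hasFPowerSeriesOnBall_of_hasSum h).factorial_smul 1 n
  rw [FormalMultilinearSeries.ofScalars_apply_eq, ← iteratedDeriv_eq_iteratedFDeriv] at hsmul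
  rw [taylorCoeff, ← hsmul]
  have : (n.factorial : ℂ) ≠ 0 := by exact_mod_cast n.factorial_ne_zero
  simp [this]

end TaylorCoeff

section LaurentCoeff

open Metric

lemma hasSum_circleIntegral_of_summable_bound {ι E : Type*} [Countable ι]
    [NormedAddCommGroup E] [NormedSpace ℂ E] {c : ℂ} {R : ℝ} (hR : 0 ≤ R) {f : ι → ℂ → E}
    {g : ℂ → E} {b : ι → ℝ} (hf : ∀ i, ContinuousOn (f i) (sphere c R)) (hb : Summable b)
    (hfb : ∀ i, ∀ z ∈ sphere c R, ‖f i z‖ ≤ b i)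
    (hg : ∀ z ∈ sphere c R, HasSum (fun i => f i z) (g z)) :
    HasSum (fun i => ∮ z in C(c, R), f i z) (∮ z in C(c, R), g z) := by
  have hmem : ∀ θ, circleMap c R θ ∈ sphere c R := circleMap_mem_sphere c hR
  refine intervalIntegral.hasSum_integral_of_dominated_convergence (fun i _ => R * b i)
    (fun i => ?_) (fun i => ?_) ?_ ?_ ?_
  · have hfi : Continuous fun θ => f i (circleMap c R θ) :=
      (hf i).comp_continuous (continuous_circleMap c R) hmem
    simp only [deriv_circleMap]
    exact (((continuous_circleMap 0 R).mul continuous_const).smul hfi).aestronglyMeasurable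
  · refine Eventually.of_forall fun θ _ => ?_
    rw [norm_smul, deriv_circleMap, norm_mul, norm_I, mul_one, norm_circleMap_zero,
      abs_of_nonneg hR]
    exact mul_le_mul_of_nonneg_left (hfb i _ (hmem θ)) hR
  · exact Eventually.of_forall fun _ _ => hb.mul_left R
  · exact intervalIntegrable_const
  · exact Eventually.of_forall fun θ _ => (hg _ (hmem θ)).const_smul _

/-- The `k`-th Laurent coefficient of `u` computed on the circle of radius `s` around the origin.
It does not depend on `s` as long as the circle stays in an annulus on which `u` is analytic. -/
def laurentCoeff (s : ℝ) (u : ℂ → ℂ) (k : ℤ) : ℂ :=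
  (2 * Real.pi * I : ℂ)⁻¹ • ∮ z in C(0, s), z ^ (-k - 1) * u z

lemma laurentCoeff_natCast {f : ℂ → ℂ} {s : ℝ} (hs : 0 < s)
    (hf : DifferentiableOn ℂ f (closedBall 0 s)) (n : ℕ) :
    laurentCoeff s f n = taylorCoeff f n := by
  have hcauchy := hf.circleIntegral_one_div_sub_center_pow_smul hs n
  have hker : ∀ z : ℂ, (1 / (z - 0) ^ (n + 1)) • f z = z ^ (-(n : ℤ) - 1) * f z := fun z => by
    rw [sub_zero, smul_eq_mul, one_div, ← neg_add', zpow_neg]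
    norm_cast
  simp only [hker] at hcauchy
  rw [laurentCoeff, hcauchy, taylorCoeff, smul_eq_mul, smul_eq_mul, ← mul_assoc, ← mul_div_assoc,
    inv_mul_cancel₀ Complex.two_pi_I_ne_zero, one_div]

lemma laurentCoeff_eq_of_differentiableAt {u : ℂ → ℂ} {r R : ℝ} (hr : 0 < r) (hrR : r ≤ R)
    (hu : ∀ z ∈ closedBall (0 : ℂ) R \ ball 0 r, DifferentiableAt ℂ u z) (k : ℤ) :
    laurentCoeff R u k = laurentCoeff r u k := by
  have hd : ∀ z ∈ closedBall (0 : ℂ) R \ ball 0 r,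
      DifferentiableAt ℂ (fun z => z ^ (-k - 1) * u z) z := fun z hz => by
    have hz0 : z ≠ 0 := fun h => hz.2 (h ▸ mem_ball_self hr)
    exact (differentiableAt_zpow.mpr (Or.inl hz0)).mul (hu z hz)
  rw [laurentCoeff, laurentCoeff,
    Complex.circleIntegral_eq_of_differentiable_on_annulus_off_countable hr hrR
      Set.countable_empty (fun z hz => (hd z hz).continuousAt.continuousWithinAt)
      fun z hz => hd z ⟨ball_subset_closedBall hz.1.1, fun h => hz.1.2 (ball_subset_closedBall h)⟩]

lemma norm_laurentCoeff_le {u : ℂ → ℂ} {s M : ℝ} (hs : 0 < s)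
    (hM : ∀ z ∈ sphere (0 : ℂ) s, ‖u z‖ ≤ M) (k : ℤ) : ‖laurentCoeff s u k‖ ≤ M * s ^ (-k) := by
  have hbound : ∀ z ∈ sphere (0 : ℂ) s, ‖z ^ (-k - 1) * u z‖ ≤ s ^ (-k - 1) * M := fun z hz => by
    rw [norm_mul, norm_zpow, mem_sphere_zero_iff_norm.mp hz]
    exact mul_le_mul_of_nonneg_left (hM z hz) (by positivity)
  refine (circleIntegral.norm_two_pi_i_inv_smul_integral_le_of_norm_le_const hs.le
    hbound).trans_eq ?_
  rw [zpow_sub_one₀ hs.ne']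
  field_simp

lemma exists_norm_laurentCoeff_le_mul_pow {u : ℂ → ℂ} {r : ℝ} (hr0 : 0 < r) (hr1 : r < 1)
    (hu : ∀ z ∈ closedBall (0 : ℂ) r⁻¹ \ ball 0 r, DifferentiableAt ℂ u z) :
    ∃ M, ∀ k, ‖laurentCoeff r u k‖ ≤ M * r ^ k.natAbs := by
  have hrr : r ≤ r⁻¹ := hr1.le.trans (one_le_inv_iff₀.mpr ⟨hr0, hr1.le⟩)
  have hcompact : IsCompact (closedBall (0 : ℂ) r⁻¹ \ ball 0 r) :=
    (isCompact_closedBall 0 r⁻¹).diff isOpen_ball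
  obtain ⟨M, hM⟩ := hcompact.exists_bound_of_continuousOn
    fun z hz => (hu z hz).continuousAt.continuousWithinAt
  have hsphere : ∀ s ∈ Set.Icc r r⁻¹, ∀ z ∈ sphere (0 : ℂ) s, ‖u z‖ ≤ M := by
    rintro s ⟨hrs, hsr⟩ z hz
    rw [mem_sphere_zero_iff_norm] at hz
    exact hM z ⟨mem_closedBall_zero_iff.mpr (hz.trans_le hsr),
      fun h => (mem_ball_zero_iff.mp h).not_ge (hrs.trans_eq hz.symm)⟩
  refine ⟨M, fun k => ?_⟩
  obtain ⟨n, rfl | rfl⟩ := k.eq_nat_or_neg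
  · rw [← laurentCoeff_eq_of_differentiableAt hr0 hrr hu]
    simpa using norm_laurentCoeff_le (inv_pos.mpr hr0) (hsphere _ (Set.right_mem_Icc.mpr hrr)) n
  · simpa using norm_laurentCoeff_le hr0 (hsphere _ (Set.left_mem_Icc.mpr hrr)) (-n)

lemma hasSum_laurentCoeff_mul {s : ℝ} (hs : 0 < s) {u f F : ℂ → ℂ} {b : ℕ → ℂ}
    (hu : ContinuousOn u (sphere 0 s)) (hb : Summable fun m => ‖b m‖ * s ^ m)
    (hF : ∀ z ∈ sphere (0 : ℂ) s, HasSum (fun m => b m * z ^ m) (F z))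
    (hf : ∀ z ∈ sphere (0 : ℂ) s, f z = u z * F z) (n : ℤ) :
    HasSum (fun m : ℕ => laurentCoeff s u (n - m) * b m) (laurentCoeff s f n) := by
  have hz0 : ∀ z ∈ sphere (0 : ℂ) s, z ≠ 0 := fun z hz => ne_of_mem_sphere hz hs.ne'
  have hpow : ContinuousOn (fun z : ℂ => z ^ (-n - 1)) (sphere 0 s) := fun z hz =>
    (continuousAt_zpow₀ z _ (Or.inl (hz0 z hz))).continuousWithinAt
  obtain ⟨M, hM⟩ := (isCompact_sphere (0 : ℂ) s).exists_bound_of_continuousOn (hpow.mul hu)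
  have hint := hasSum_circleIntegral_of_summable_bound hs.le
    (f := fun m z => z ^ (-n - 1) * u z * (b m * z ^ m)) (g := fun z => z ^ (-n - 1) * f z)
    (b := fun m => M * (‖b m‖ * s ^ m)) (fun m => by fun_prop) (hb.mul_left M)
    (fun m z hz => by
      rw [norm_mul _ (b m * _), norm_mul (b m), norm_pow, mem_sphere_zero_iff_norm.mp hz]
      exact mul_le_mul_of_nonneg_right (hM z hz) (by positivity))
    (fun z hz => by
      rw [hf z hz, ← mul_assoc]
      exact (hF z hz).mul_left _)
  refine (hint.const_smul (2 * Real.pi * I : ℂ)⁻¹).congr_fun fun m => ?_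
  rw [laurentCoeff, smul_mul_assoc, mul_comm _ (b m), ← circleIntegral.integral_const_mul]
  congr 1
  refine circleIntegral.integral_congr hs.le fun z hz => ?_
  rw [show -(n - m : ℤ) - 1 = -n - 1 + m by ring, zpow_add₀ (hz0 z hz), zpow_natCast]
  ring

lemma exists_annulus_subset_of_mem_nhdsSet_sphere {t : Set ℂ} (ht : t ∈ 𝓝ˢ (sphere (0 : ℂ) 1)) :
    ∃ r, 0 < r ∧ r < 1 ∧ closedBall 0 r⁻¹ \ ball 0 r ⊆ t := by
  have hsphere : sphere (0 : ℂ) 1 = dist 0 ⁻¹' {1} := by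
    ext z
    rw [mem_sphere', Set.mem_preimage, Set.mem_singleton_iff]
  rw [hsphere, ← (isClosedMap_dist 0).comap_nhds_eq (by fun_prop)] at ht
  obtain ⟨v, hv, hvt⟩ := mem_comap.mp ht
  have hIcc : Tendsto (fun r : ℝ => Set.Icc r r⁻¹) (𝓝[<] 1) (𝓝 1).smallSets := by
    have hinv : Tendsto (fun r : ℝ => r⁻¹) (𝓝 1) (𝓝 1) := by
      simpa only [inv_one] using
        (continuousAt_inv₀ (one_ne_zero (α := ℝ))).tendsto
    exact (tendsto_id.Icc hinv).mono_left nhdsWithin_le_nhds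
  obtain ⟨r, hrv, hr⟩ := ((hIcc.eventually (eventually_smallSets_subset.mpr hv)).and
    (Ioo_mem_nhdsLT one_pos)).exists
  refine ⟨r, hr.1, hr.2, fun z hz => hvt (hrv ?_)⟩
  rw [dist_comm]
  exact ⟨not_lt.mp hz.2, hz.1⟩

end LaurentCoeff

section WeightedHardy

/-- Membership of a function on the disk in the weighted Hardy space `H²_β`. Only the values of `f`
on `unitDisk` matter. -/
def MemWeightedHardy (β : ℕ → ℝ) (f : ℂ → ℂ) : Prop :=
  DifferentiableOn ℂ f unitDisk ∧ Summable fun k => (‖taylorCoeff f k‖ * β k) ^ 2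

variable {β : ℕ → ℝ}

lemma memWeightedHardy_congr {f g : ℂ → ℂ} (h : Set.EqOn f g unitDisk) :
    MemWeightedHardy β f ↔ MemWeightedHardy β g := by
  simp only [MemWeightedHardy, differentiableOn_congr h, taylorCoeff_congr h]

lemma MemWeightedHardy.of_mul_near_sphere (hβ : IsRegularWeight β) {u f F : ℂ → ℂ}
    (hu : AnalyticOnNhd ℂ u (Metric.sphere 0 1)) (hF : MemWeightedHardy β F)
    (hf : DifferentiableOn ℂ f unitDisk)
    (hfuF : ∀ᶠ z in 𝓝ˢ (Metric.sphere 0 1), z ∈ unitDisk → f z = u z * F z) :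
    MemWeightedHardy β f := by
  have hud : ∀ᶠ z in 𝓝ˢ (Metric.sphere 0 1), DifferentiableAt ℂ u z :=
    eventually_nhdsSet_iff_forall.mpr fun z hz =>
      (hu z hz).eventually_analyticAt.mono fun _ h => h.differentiableAt
  obtain ⟨r, hr0, hr1, hr⟩ := exists_annulus_subset_of_mem_nhdsSet_sphere (hud.and hfuF)
  have hrr : r ≤ r⁻¹ := hr1.le.trans (one_le_inv_iff₀.mpr ⟨hr0, hr1.le⟩)
  have hdisk : Metric.closedBall 0 r ⊆ unitDisk := Metric.closedBall_subset_ball hr1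
  have hannulus : Metric.sphere (0 : ℂ) r ⊆ Metric.closedBall 0 r⁻¹ \ Metric.ball 0 r :=
    fun z hz => ⟨(Metric.mem_sphere.mp hz).trans_le hrr, (Metric.mem_sphere.mp hz).not_lt⟩
  obtain ⟨M, hM⟩ := exists_norm_laurentCoeff_le_mul_pow hr0 hr1 fun z hz => (hr hz).1
  refine ⟨hf, hβ.summable_sq_of_hasSum_conv hr0.le hr1 hM (fun n => ?_) hF.2⟩
  have hsum : Summable fun m => ‖taylorCoeff F m‖ * r ^ m := by
    have hr_mem : (r : ℂ) ∈ unitDisk := by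
      rwa [mem_unitDisk, Complex.norm_of_nonneg hr0.le]
    refine (hasSum_taylorCoeff hF.1 hr_mem).summable.norm.congr fun m => ?_
    rw [norm_mul, norm_pow, Complex.norm_of_nonneg hr0.le]
  rw [← laurentCoeff_natCast hr0 (hf.mono hdisk)]
  exact hasSum_laurentCoeff_mul hr0
    (fun z hz => (hr (hannulus hz)).1.continuousAt.continuousWithinAt) hsum
    (fun z hz => hasSum_taylorCoeff hF.1 (hdisk (Metric.sphere_subset_closedBall hz)))
    (fun z hz => (hr (hannulus hz)).2 (hdisk (Metric.sphere_subset_closedBall hz))) n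

lemma memWeightedHardy_deriv_iff (hβ : IsRegularWeight β) {f : ℂ → ℂ}
    (hf : DifferentiableOn ℂ f unitDisk) :
    MemWeightedHardy β (deriv f) ↔ MemWeightedHardy (fun n => ((n : ℝ) + 1) * β n) f := by
  have hequiv : Asymptotics.IsEquivalent atTop
      (fun k : ℕ => ((k + 1 : ℕ) + 1 : ℝ) * β (k + 1)) fun k => ((k : ℝ) + 1) * β k :=
    Asymptotics.isEquivalent_of_tendsto_one hβ.succ_mul.tendsto_ratio
  have hcoeff : ∀ k, ‖taylorCoeff (deriv f) k‖ * β k =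
      ‖taylorCoeff f (k + 1)‖ * (((k : ℝ) + 1) * β k) := fun k => by
    have hk : ‖(k : ℂ) + 1‖ = k + 1 := by exact_mod_cast Complex.norm_natCast (k + 1)
    rw [taylorCoeff_deriv, norm_mul, hk]
    ring
  simp only [MemWeightedHardy, hf, hf.deriv isOpen_unitDisk, true_and, hcoeff]
  rw [← summable_nat_add_iff (f := fun k => (‖taylorCoeff f k‖ * (((k : ℝ) + 1) * β k)) ^ 2) 1]
  exact ((Asymptotics.IsEquivalent.refl.mul hequiv).pow 2).summable_iff_nat.symm

lemma exists_eval_continuousLinearMap (hβ : IsRegularWeight β) {z : ℂ} (hz : z ∈ unitDisk) :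
    ∃ φ : H2 →L[ℂ] ℂ, ∀ a : H2, HasSum (fun k => a k / (β k : ℂ) * z ^ k) (φ a) := by
  have hmem : Memℓp (fun k => (starRingEnd ℂ) (z ^ k / (β k : ℂ))) 2 := by
    refine memℓp_gen ((hβ.summable_pow_div_sq (norm_nonneg z) (mem_unitDisk.mp hz)).congr
      fun k => ?_)
    simp [abs_of_pos (hβ.pos k)]
  refine ⟨innerSL ℂ (⟨_, hmem⟩ : H2), fun a => ?_⟩
  refine (lp.hasSum_inner (⟨_, hmem⟩ : H2) a).congr_fun fun k => ?_
  simp only [RCLike.inner_apply, Complex.conj_conj]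
  ring

lemma hasSum_repFun (hβ : IsRegularWeight β) (a : H2) {z : ℂ} (hz : z ∈ unitDisk) :
    HasSum (fun k => a k / (β k : ℂ) * z ^ k) (repFun β a z) := by
  obtain ⟨φ, hφ⟩ := exists_eval_continuousLinearMap hβ hz
  exact (hφ a).summable.hasSum

lemma taylorCoeff_repFun (hβ : IsRegularWeight β) (a : H2) (n : ℕ) :
    taylorCoeff (repFun β a) n = a n / (β n : ℂ) :=
  taylorCoeff_of_hasSum (fun _ hz => hasSum_repFun hβ a hz) n

lemma memWeightedHardy_repFun (hβ : IsRegularWeight β) (a : H2) :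
    MemWeightedHardy β (repFun β a) := by
  refine ⟨differentiableOn_of_hasSum fun _ hz => hasSum_repFun hβ a hz, ?_⟩
  refine ((lp.memℓp a).summable (by norm_num)).congr fun k => ?_
  have hk := hβ.pos k
  rw [taylorCoeff_repFun hβ, norm_div, Complex.norm_of_nonneg hk.le, div_mul_cancel₀ _ hk.ne',
    ENNReal.toReal_ofNat, Real.rpow_two]

lemma MemWeightedHardy.exists_repFun_eqOn (hβ : IsRegularWeight β) {f : ℂ → ℂ}
    (hf : MemWeightedHardy β f) : ∃ a : H2, Set.EqOn (repFun β a) f unitDisk := by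
  have hmem : Memℓp (fun k => taylorCoeff f k * (β k : ℂ)) 2 := by
    refine memℓp_gen (hf.2.congr fun k => ?_)
    rw [norm_mul, Complex.norm_of_nonneg (hβ.pos k).le, ENNReal.toReal_ofNat, Real.rpow_two]
  refine ⟨⟨_, hmem⟩, fun z hz => ((hasSum_taylorCoeff hf.1 hz).congr_fun fun k => ?_).tsum_eq⟩
  have hk : (β k : ℂ) ≠ 0 := Complex.ofReal_ne_zero.mpr (hβ.pos k).ne'
  exact congrArg (· * z ^ k) (mul_div_cancel_right₀ _ hk)

lemma eq_of_repFun_eqOn (hβ : IsRegularWeight β) {a b : H2}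
    (h : Set.EqOn (repFun β a) (repFun β b) unitDisk) : a = b := by
  ext n
  have hn : (β n : ℂ) ≠ 0 := Complex.ofReal_ne_zero.mpr (hβ.pos n).ne'
  rw [← div_left_inj' hn, ← taylorCoeff_repFun hβ, ← taylorCoeff_repFun hβ, taylorCoeff_congr h]

end WeightedHardy

section CompositionOperator

lemma exists_continuousLinearMap_eq_of_separating {𝕜 E F ι : Type*} [NontriviallyNormedField 𝕜]
    [NormedAddCommGroup E] [NormedSpace 𝕜 E] [CompleteSpace E]
    [NormedAddCommGroup F] [NormedSpace 𝕜 F] [CompleteSpace F]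
    {φ : ι → F →L[𝕜] 𝕜} {χ : ι → E →L[𝕜] 𝕜} (hφ : ∀ x y, (∀ i, φ i x = φ i y) → x = y)
    {T : E → F} (hT : ∀ i a, φ i (T a) = χ i a) : ∃ S : E →L[𝕜] F, ∀ a, S a = T a := by
  let L : E →ₗ[𝕜] F :=
    { toFun := T
      map_add' := fun a b => hφ _ _ fun i => by simp only [map_add, hT]
      map_smul' := fun c a => hφ _ _ fun i => by simp only [map_smul, hT, RingHom.id_apply] }
  refine ⟨ContinuousLinearMap.ofSeqClosedGraph (g := L) fun a x y ha hLa => ?_, fun a => rfl⟩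
  refine hφ _ _ fun i => tendsto_nhds_unique (((φ i).continuous.tendsto y).comp hLa) ?_
  have hL : ∀ x, φ i (L x) = χ i x := hT i
  simpa only [Function.comp_def, hL] using ((χ i).continuous.tendsto x).comp ha

variable {β : ℕ → ℝ} {ψ : ℂ → ℂ}

lemma exists_repComp_iff (hβ : IsRegularWeight β) (hmap : Set.MapsTo ψ unitDisk unitDisk) :
    (∃ T : H2 →L[ℂ] H2, RepComp β ψ T) ↔
      ∀ f, MemWeightedHardy β f → MemWeightedHardy β (f ∘ ψ) := by
  constructor
  · rintro ⟨T, hT⟩ f hf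
    obtain ⟨a, ha⟩ := hf.exists_repFun_eqOn hβ
    refine (memWeightedHardy_congr fun z hz => ?_).mp (memWeightedHardy_repFun hβ (T a))
    rw [hT a z hz, ha (hmap hz), Function.comp_apply]
  · intro hcomp
    choose T hT using fun a => (hcomp _ (memWeightedHardy_repFun hβ a)).exists_repFun_eqOn hβ
    choose φ hφ using fun z : unitDisk => exists_eval_continuousLinearMap hβ z.2
    have heval : ∀ (z : unitDisk) a, φ z a = repFun β a z := fun z a => (hφ z a).tsum_eq.symm
    obtain ⟨S, hS⟩ := exists_continuousLinearMap_eq_of_separating (φ := φ)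
      (χ := fun z => φ ⟨ψ z, hmap z.2⟩) (T := T)
      (fun a b hab => eq_of_repFun_eqOn hβ fun z hz => by simpa only [heval] using hab ⟨z, hz⟩)
      fun z a => by simpa only [heval, Function.comp_apply] using hT a z.2
    exact ⟨S, fun a z hz => by rw [hS, hT a hz, Function.comp_apply]⟩

lemma deriv_comp_eqOn_unitDisk (hψ : DifferentiableOn ℂ ψ unitDisk)
    (hmap : Set.MapsTo ψ unitDisk unitDisk) {f : ℂ → ℂ} (hf : DifferentiableOn ℂ f unitDisk) :
    Set.EqOn (deriv (f ∘ ψ)) (fun z => deriv ψ z * (deriv f ∘ ψ) z) unitDisk := fun z hz =>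
  (deriv_comp z (hf.differentiableAt (isOpen_unitDisk.mem_nhds (hmap hz)))
    (hψ.differentiableAt (isOpen_unitDisk.mem_nhds hz))).trans (mul_comm _ _)

lemma MemWeightedHardy.comp_succ_mul (hβ : IsRegularWeight β) (hψ : DifferentiableOn ℂ ψ unitDisk)
    (hψ' : AnalyticOnNhd ℂ (deriv ψ) (Metric.sphere 0 1)) (hmap : Set.MapsTo ψ unitDisk unitDisk)
    (hcomp : ∀ f, MemWeightedHardy β f → MemWeightedHardy β (f ∘ ψ)) {f : ℂ → ℂ}
    (hf : MemWeightedHardy (fun n => ((n : ℝ) + 1) * β n) f) :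
    MemWeightedHardy (fun n => ((n : ℝ) + 1) * β n) (f ∘ ψ) := by
  have hfψ : DifferentiableOn ℂ (f ∘ ψ) unitDisk := hf.1.comp hψ hmap
  rw [← memWeightedHardy_deriv_iff hβ hfψ]
  exact (hcomp _ ((memWeightedHardy_deriv_iff hβ hf.1).mpr hf)).of_mul_near_sphere hβ hψ'
    (hfψ.deriv isOpen_unitDisk)
    (Eventually.of_forall fun z hz => deriv_comp_eqOn_unitDisk hψ hmap hf.1 hz)

lemma MemWeightedHardy.comp_of_comp_succ_mul (hβ : IsRegularWeight β)
    (hψ : DifferentiableOn ℂ ψ unitDisk) (hψ' : AnalyticOnNhd ℂ (deriv ψ) (Metric.sphere 0 1))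
    (hne : ∀ z ∈ Metric.sphere 0 1, deriv ψ z ≠ 0) (hmap : Set.MapsTo ψ unitDisk unitDisk)
    (hcomp : ∀ f, MemWeightedHardy (fun n => ((n : ℝ) + 1) * β n) f →
      MemWeightedHardy (fun n => ((n : ℝ) + 1) * β n) (f ∘ ψ)) {f : ℂ → ℂ}
    (hf : MemWeightedHardy β f) : MemWeightedHardy β (f ∘ ψ) := by
  obtain ⟨F, hF⟩ := hf.1.isExactOn_ball
  have hFd : DifferentiableOn ℂ F unitDisk := fun z hz =>
    (hF z hz).differentiableAt.differentiableWithinAt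
  have hF' : Set.EqOn (deriv F) f unitDisk := fun z hz => (hF z hz).deriv
  have hFψ := hcomp F ((memWeightedHardy_deriv_iff hβ hFd).mp ((memWeightedHardy_congr hF').mpr hf))
  refine ((memWeightedHardy_deriv_iff hβ hFψ.1).mpr hFψ).of_mul_near_sphere hβ (hψ'.inv hne)
    (hf.1.comp hψ hmap) (eventually_nhdsSet_iff_forall.mpr fun z hz => ?_)
  filter_upwards [(hψ' z hz).continuousAt.eventually_ne (hne z hz)] with ζ hζ hζ_mem
  rw [deriv_comp_eqOn_unitDisk hψ hmap hFd hζ_mem, Pi.inv_apply, inv_mul_cancel_left₀ hζ,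
    Function.comp_apply, Function.comp_apply, hF' (hmap hζ_mem)]

end CompositionOperator

/-- Let `H²_β` come from a weight sequence `w_k → 1`, let `ψ` be
analytic on a neighbourhood of the closed disk with `ψ(𝔻) ⊆ 𝔻`, and let
`β̃_n = (n+1)β_n`. If `C_ψ` is bounded on `H²_β` then `C_ψ` is bounded on `H²_{β̃}`;
moreover if `ψ'` has no zero on the unit circle, then the converse holds. -/
theorem statement5 (w : ℕ → ℝ) (hpos : ∀ k, 1 ≤ k → 0 < w k)
    (hlim : Tendsto w atTop (nhds 1))
    (ψ : ℂ → ℂ) (hψ : AnalyticOnClosedDisk ψ)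
    (hmap : Set.MapsTo ψ unitDisk unitDisk) :
    ((∃ T : H2 →L[ℂ] H2, RepComp (betaSeq w) ψ T) →
      ∃ T : H2 →L[ℂ] H2, RepComp (fun n => ((n : ℝ) + 1) * betaSeq w n) ψ T) ∧
    ((∀ z : ℂ, ‖z‖ = 1 → deriv ψ z ≠ 0) →
      (∃ T : H2 →L[ℂ] H2, RepComp (fun n => ((n : ℝ) + 1) * betaSeq w n) ψ T) →
      ∃ T : H2 →L[ℂ] H2, RepComp (betaSeq w) ψ T) := by
  have hβ : IsRegularWeight (betaSeq w) := isRegularWeight_betaSeq hpos hlim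
  obtain ⟨U, -, hU, hψU⟩ := hψ
  have hψd : DifferentiableOn ℂ ψ unitDisk :=
    hψU.differentiableOn.mono (Metric.ball_subset_closedBall.trans hU)
  have hψ' : AnalyticOnNhd ℂ (deriv ψ) (Metric.sphere 0 1) :=
    hψU.deriv.mono (Metric.sphere_subset_closedBall.trans hU)
  rw [exists_repComp_iff hβ hmap, exists_repComp_iff hβ.succ_mul hmap]
  exact ⟨fun hcomp _ hf => hf.comp_succ_mul hβ hψd hψ' hmap hcomp,
    fun hne hcomp _ hf => hf.comp_of_comp_succ_mul hβ hψd hψ'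
      (fun z hz => hne z (mem_sphere_zero_iff_norm.mp hz)) hmap hcomp⟩
end
end

section
/- Let H²_β be the weighted Hardy space induced by a weight sequence w = (w_k)_{k≥1} with w_k → 1. Let z₀ ∈ 𝔻 \ {0}, φ_{z₀}(z) = (z₀ − z)/(1 − conj(z₀)z), and B(z) = z·φ_{z₀}(z). Then both sequences {B^n(z), z·B^n(z) : n = 0, 1, 2, …} and {B^n(z), φ_{z₀}(z)·B^n(z) : n = 0, 1, 2, …} are total and finitely linearly independent in H²_β. -/
noncomputable section

open Complex Filter Topology

/-! With `B = z·φ`, where `φ = φ_{z₀}`, clearing the denominator of `φ` gives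
`z + φ = z₀ + conj z₀ · B`, so `z` and `φ` are the two roots of
`X² - (z₀ + conj z₀ · B) X + B`. Hence the span of `{Bⁿ, z·Bⁿ}` is stable under multiplication
by `z` and by `φ`, and so contains every monomial; the same holds for `{Bⁿ, φ·Bⁿ}` by symmetry.
For independence, suppose `p(B) + z·q(B) = 0`. As `φ` is an involution that fixes `B`, composing
with it and subtracting gives `(φ - z)·q(B) = 0`, which forces `q = 0` because `B` is at most
two-to-one, and then `p = 0`. -/

section Weights

open Asymptotics

/-- A positive weight with `log β_k = o(k)`, equivalently `β_k^{1/k} → 1`. This growth makes the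
elements of `H²_β` analytic on the disk and puts every function that is analytic on the closed
disk into `H²_β`. -/
structure IsSubexponentialWeight (β : ℕ → ℝ) : Prop where
  pos : ∀ k, 0 < β k
  log_isLittleO : (fun k => Real.log (β k)) =o[atTop] fun k => (k : ℝ)

namespace IsSubexponentialWeight

variable {β : ℕ → ℝ}

lemma ofReal_ne_zero (hβ : IsSubexponentialWeight β) (k : ℕ) : (β k : ℂ) ≠ 0 :=
  Complex.ofReal_ne_zero.2 (hβ.pos k).ne'

lemma inv (hβ : IsSubexponentialWeight β) : IsSubexponentialWeight fun k => (β k)⁻¹ where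
  pos k := inv_pos.2 (hβ.pos k)
  log_isLittleO := by simpa only [Real.log_inv] using hβ.log_isLittleO.neg_left

lemma pow (hβ : IsSubexponentialWeight β) (n : ℕ) : IsSubexponentialWeight fun k => β k ^ n where
  pos k := pow_pos (hβ.pos k) n
  log_isLittleO := by simpa only [Real.log_pow] using hβ.log_isLittleO.const_mul_left (n : ℝ)

lemma summable_mul_pow (hβ : IsSubexponentialWeight β) {r : ℝ} (hr₀ : 0 < r) (hr₁ : r < 1) :
    Summable fun k => β k * r ^ k := by
  have hlog : Real.log r < 0 := Real.log_neg hr₀ hr₁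
  have hgeom : Summable fun k : ℕ => Real.exp (k * (Real.log r / 2)) :=
    Real.summable_exp_nat_mul_iff.2 (by linarith)
  refine summable_of_isBigO_nat hgeom (IsBigO.of_bound 1 ?_)
  filter_upwards [hβ.log_isLittleO.bound (c := -Real.log r / 2) (by linarith)] with k hk
  have hterm : β k * r ^ k = Real.exp (Real.log (β k) + k * Real.log r) := by
    rw [Real.exp_add, Real.exp_log (hβ.pos k), Real.exp_nat_mul, Real.exp_log hr₀]
  rw [hterm, one_mul, Real.norm_of_nonneg (Real.exp_nonneg _),
    Real.norm_of_nonneg (Real.exp_nonneg _), Real.exp_le_exp]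
  rw [Real.norm_of_nonneg (Nat.cast_nonneg k)] at hk
  linarith [Real.le_norm_self (Real.log (β k))]

end IsSubexponentialWeight

lemma isSubexponentialWeight_betaSeq {w : ℕ → ℝ} (hpos : ∀ k, 1 ≤ k → 0 < w k)
    (hlim : Tendsto w atTop (𝓝 1)) : IsSubexponentialWeight (betaSeq w) where
  pos k := Finset.prod_pos fun j hj => hpos j (Finset.mem_Icc.1 hj).1
  log_isLittleO := by
    have hlog : Tendsto (fun k => Real.log (w (k + 1))) atTop (𝓝 0) := by
      simpa only [Real.log_one, Function.comp_apply] using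
        (hlim.comp (tendsto_add_atTop_nat 1)).log one_ne_zero
    refine (isLittleO_sum_range_of_tendsto_zero hlog).congr_left fun k => ?_
    rw [betaSeq, Real.log_prod fun j hj => (hpos j (Finset.mem_Icc.1 hj).1).ne',
      Finset.range_eq_Ico, Finset.sum_Ico_add' (fun j => Real.log (w j)) 0 k 1]
    rfl

end Weights

section Representation

variable {β : ℕ → ℝ}

lemma IsSubexponentialWeight.summable_repFun (hβ : IsSubexponentialWeight β) (a : H2) {z : ℂ}
    (hz : z ∈ unitDisk) : Summable fun k => a k / (β k : ℂ) * z ^ k := by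
  obtain ⟨r, hzr, hr₁⟩ := exists_between (mem_ball_zero_iff.1 hz)
  have hr₀ : 0 < r := (norm_nonneg z).trans_lt hzr
  refine .of_norm_bounded ((hβ.inv.summable_mul_pow hr₀ hr₁).mul_left ‖a‖) fun k => ?_
  have hβk := hβ.pos k
  have hak : ‖a k‖ ≤ ‖a‖ := lp.norm_apply_le_norm two_ne_zero a k
  rw [norm_mul, norm_div, norm_pow, Complex.norm_real, Real.norm_of_nonneg hβk.le, div_eq_mul_inv,
    mul_assoc]
  gcongr

/-- The linear map sending a vector of `H2` to the function on the disk that it represents. -/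
def repFunLinearMap (hβ : IsSubexponentialWeight β) : H2 →ₗ[ℂ] (unitDisk → ℂ) where
  toFun a := unitDisk.domRestrict (repFun β a)
  map_add' a b := by
    ext ⟨z, hz⟩
    change repFun β (a + b) z = repFun β a z + repFun β b z
    simp only [repFun, lp.coeFn_add, Pi.add_apply, add_div, add_mul]
    exact (hβ.summable_repFun a hz).tsum_add (hβ.summable_repFun b hz)
  map_smul' c a := by
    ext ⟨z, hz⟩
    change repFun β (c • a) z = c * repFun β a z
    simp only [repFun, lp.coeFn_smul, Pi.smul_apply, smul_eq_mul, mul_div_assoc, mul_assoc,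
      tsum_mul_left]

lemma hasFPowerSeriesAt_repFun (hβ : IsSubexponentialWeight β) (a : H2) :
    HasFPowerSeriesAt (repFun β a) (.ofScalars ℂ fun k => a k / (β k : ℂ)) 0 := by
  rw [hasFPowerSeriesAt_iff]
  filter_upwards [Metric.ball_mem_nhds (0 : ℂ) one_pos] with z hz
  simpa only [FormalMultilinearSeries.coeff_ofScalars, smul_eq_mul, mul_comm, zero_add, repFun]
    using (hβ.summable_repFun a hz).hasSum

lemma repFunLinearMap_injective (hβ : IsSubexponentialWeight β) :
    Function.Injective (repFunLinearMap hβ) := by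
  rw [injective_iff_map_eq_zero]
  intro a ha
  have hzero : repFun β a =ᶠ[𝓝 0] 0 := by
    filter_upwards [Metric.ball_mem_nhds (0 : ℂ) one_pos] with z hz
    exact congrFun ha ⟨z, hz⟩
  have hseries := ((hasFPowerSeriesAt_repFun hβ a).congr hzero).eq_zero
  ext k
  have hcoeff : a k / (β k : ℂ) = 0 := by
    rw [← FormalMultilinearSeries.coeff_ofScalars (𝕜 := ℂ) (p := fun k => a k / (β k : ℂ)), hseries]
    rfl
  exact (div_eq_zero_iff.1 hcoeff).resolve_right (hβ.ofReal_ne_zero k)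

lemma repFun_single (β : ℕ → ℝ) (k : ℕ) (c z : ℂ) :
    repFun β (lp.single 2 k c) z = c / (β k : ℂ) * z ^ k := by
  rw [repFun, tsum_eq_single k, lp.single_apply_self]
  intro j hj
  rw [lp.single_apply_ne _ _ _ hj, zero_div, zero_mul]

lemma memlp_mul_coeff_of_one_lt_radius (hβ : IsSubexponentialWeight β)
    {p : FormalMultilinearSeries ℂ ℂ ℂ} (hp : 1 < p.radius) :
    Memℓp (fun k => (β k : ℂ) * p.coeff k) 2 := by
  obtain ⟨r, hr₁, hrp⟩ := ENNReal.lt_iff_exists_nnreal_btwn.1 hp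
  replace hr₁ : (1 : ℝ) < r := mod_cast hr₁
  have hr₀ : (0 : ℝ) < r := one_pos.trans hr₁
  obtain ⟨C, -, hC⟩ := p.norm_mul_pow_le_of_lt_radius hrp
  have hsum := (hβ.pow 2).summable_mul_pow (pow_pos (inv_pos.2 hr₀) 2)
    (pow_lt_one₀ (inv_nonneg.2 hr₀.le) (inv_lt_one_of_one_lt₀ hr₁) two_ne_zero)
  refine memℓp_gen (.of_nonneg_of_le (fun k => by positivity) (fun k => ?_) (hsum.mul_left (C ^ 2)))
  have hβk := hβ.pos k
  have hcoeff : ‖p.coeff k‖ ≤ C * (r : ℝ)⁻¹ ^ k := by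
    rw [inv_pow, ← div_eq_mul_inv, le_div_iff₀ (by positivity),
      ← FormalMultilinearSeries.norm_apply_eq_norm_coef]
    exact hC k
  rw [ENNReal.toReal_ofNat, Real.rpow_ofNat, norm_mul, Complex.norm_real,
    Real.norm_of_nonneg hβk.le]
  calc (β k * ‖p.coeff k‖) ^ 2 ≤ (β k * (C * (r : ℝ)⁻¹ ^ k)) ^ 2 := by gcongr
    _ = C ^ 2 * (β k ^ 2 * ((r : ℝ)⁻¹ ^ 2) ^ k) := by ring

lemma exists_hasFPowerSeriesOnBall_of_analyticOnNhd_closedBall {E : Type*} [NormedAddCommGroup E]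
    [NormedSpace ℂ E] [CompleteSpace E] {f : ℂ → E} {c : ℂ} {r : ℝ} (hr : 0 ≤ r)
    (hf : AnalyticOnNhd ℂ f (Metric.closedBall c r)) :
    ∃ (p : FormalMultilinearSeries ℂ ℂ E) (R : NNReal), r < R ∧ HasFPowerSeriesOnBall f p c R := by
  obtain ⟨δ, hδ, hsub⟩ := (isCompact_closedBall c r).exists_cthickening_subset_open
    (isOpen_analyticAt ℂ f) hf
  rw [cthickening_closedBall hδ.le hr] at hsub
  have hdiff : DifferentiableOn ℂ f (Metric.closedBall c (δ + r)) := fun z hz =>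
    (hsub hz).differentiableAt.differentiableWithinAt
  lift δ + r to NNReal using by positivity with R hR
  exact ⟨cauchyPowerSeries f c R, R, by linarith,
    hdiff.hasFPowerSeriesOnBall (NNReal.coe_pos.1 (by linarith))⟩

lemma exists_repFun_eq_of_analyticOnNhd (hβ : IsSubexponentialWeight β) {f : ℂ → ℂ}
    (hf : AnalyticOnNhd ℂ f (Metric.closedBall 0 1)) :
    ∃ a : H2, ∀ z ∈ unitDisk, repFun β a z = f z := by
  obtain ⟨p, R, hR, hp⟩ := exists_hasFPowerSeriesOnBall_of_analyticOnNhd_closedBall zero_le_one hf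
  have hradius : 1 < p.radius := lt_of_lt_of_le (mod_cast hR) hp.r_le
  refine ⟨⟨_, memlp_mul_coeff_of_one_lt_radius hβ hradius⟩, fun z hz => ?_⟩
  have hzR : z ∈ Metric.eball (0 : ℂ) R := by
    rw [Metric.eball_coe]
    exact Metric.ball_subset_ball hR.le hz
  rw [← zero_add z, ← (hp.hasSum hzR).tsum_eq, zero_add]
  refine tsum_congr fun k => ?_
  rw [FormalMultilinearSeries.apply_eq_pow_smul_coeff, smul_eq_mul, mul_comm (z ^ k),
    mul_div_cancel_left₀ _ (hβ.ofReal_ne_zero k)]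

lemma topologicalClosure_span_range_lp_single (ι 𝕜 : Type*) [DecidableEq ι] [RCLike 𝕜] :
    (Submodule.span 𝕜
      (Set.range fun i => lp.single (E := fun _ : ι => 𝕜) 2 i 1)).topologicalClosure = ⊤ := by
  let b := HilbertBasis.ofRepr (LinearIsometryEquiv.refl 𝕜 (lp (fun _ : ι => 𝕜) 2))
  have hb (i : ι) : lp.single 2 i 1 = b i := b.repr_symm_single i
  simpa only [hb] using b.dense_span

lemma topologicalClosure_span_eq_top_of_pow_mem {ι : Type*} (hβ : IsSubexponentialWeight β)
    {c : ι → H2}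
    (hc : ∀ k : ℕ, unitDisk.domRestrict id ^ k ∈
      Submodule.span ℂ (Set.range (repFunLinearMap hβ ∘ c))) :
    (Submodule.span ℂ (Set.range c)).topologicalClosure = ⊤ := by
  rw [eq_top_iff, ← topologicalClosure_span_range_lp_single ℕ ℂ]
  refine Submodule.topologicalClosure_mono (Submodule.span_le.2 ?_)
  rintro _ ⟨k, rfl⟩
  have himage : repFunLinearMap hβ (lp.single 2 k 1) =
      (β k : ℂ)⁻¹ • unitDisk.domRestrict id ^ k := by
    ext z
    exact (repFun_single β k 1 z).trans (by rw [one_div]; rfl)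
  have hmem := Submodule.smul_mem _ (β k : ℂ)⁻¹ (hc k)
  rw [← himage, Set.range_comp, Submodule.span_image] at hmem
  exact ((repFunLinearMap_injective hβ).mem_set_image).1 hmem

theorem exists_repFun_eq_total_linearIndependent {ι : Type*} (hβ : IsSubexponentialWeight β)
    {f : ι → ℂ → ℂ} (hf : ∀ i, AnalyticOnNhd ℂ (f i) (Metric.closedBall 0 1))
    (hind : LinearIndependent ℂ fun i => unitDisk.domRestrict (f i))
    (hpow : ∀ k : ℕ, unitDisk.domRestrict id ^ k ∈
      Submodule.span ℂ (Set.range fun i => unitDisk.domRestrict (f i))) :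
    ∃ c : ι → H2, (∀ i, ∀ z ∈ unitDisk, repFun β (c i) z = f i z) ∧
      (Submodule.span ℂ (Set.range c)).topologicalClosure = ⊤ ∧ LinearIndependent ℂ c := by
  choose c hc using fun i => exists_repFun_eq_of_analyticOnNhd hβ (hf i)
  have hcomp : repFunLinearMap hβ ∘ c = fun i => unitDisk.domRestrict (f i) := by
    ext i z
    exact hc i z z.2
  refine ⟨c, hc, topologicalClosure_span_eq_top_of_pow_mem hβ ?_, .of_comp (repFunLinearMap hβ) ?_⟩
  · rwa [hcomp]
  · rwa [hcomp]

end Representation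

section MixedPowers

open Polynomial

/-- The family `{bⁿ, h·bⁿ : n ∈ ℕ}`, with `bⁿ` at the index `(0, n)` and `h·bⁿ` at `(1, n)`. -/
def mixedPowers {A : Type*} [Monoid A] (h b : A) (i : Fin 2 × ℕ) : A := h ^ (i.1 : ℕ) * b ^ i.2

section Monoid

variable {A : Type*} [Monoid A] (h b : A) (n : ℕ)

lemma mixedPowers_zero : mixedPowers h b (0, n) = b ^ n := by simp [mixedPowers]

lemma mixedPowers_one : mixedPowers h b (1, n) = h * b ^ n := by simp [mixedPowers]

end Monoid

section Semiring

variable {R A : Type*} [CommSemiring R] [Semiring A] [Algebra R A]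

lemma adjoin_le_of_mul_mem {T : Set A} {S : Submodule R A} (hone : 1 ∈ S)
    (hmul : ∀ t ∈ T, ∀ s ∈ S, t * s ∈ S) : (Algebra.adjoin R T).toSubmodule ≤ S := by
  rw [Algebra.adjoin_eq_span, Submodule.span_le]
  intro m hm
  induction hm using Submonoid.closure_induction_left with
  | one => exact hone
  | mul_left t ht s _ hs => exact hmul t ht s hs

lemma mul_mem_span_range {ι : Type*} {f : ι → A} {x : A}
    (hx : ∀ i, x * f i ∈ Submodule.span R (Set.range f)) :
    ∀ s ∈ Submodule.span R (Set.range f), x * s ∈ Submodule.span R (Set.range f) :=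
  Submodule.span_le (p := (Submodule.span R (Set.range f)).comap (LinearMap.mulLeft R x)).2
    (Set.range_subset_iff.2 hx)

end Semiring

lemma adjoin_pair_le_span_mixedPowers {R A : Type*} [CommRing R] [CommRing A] [Algebra R A]
    {x y : A} {a c : R}
    (hxy : x + y = algebraMap R A a + c • (x * y)) :
    (Algebra.adjoin R {x, y}).toSubmodule ≤
      Submodule.span R (Set.range (mixedPowers x (x * y))) := by
  set S := Submodule.span R (Set.range (mixedPowers x (x * y)))
  have hpow (n : ℕ) : (x * y) ^ n ∈ S :=
    Submodule.subset_span ⟨(0, n), mixedPowers_zero _ _ n⟩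
  have hmulpow (n : ℕ) : x * (x * y) ^ n ∈ S :=
    Submodule.subset_span ⟨(1, n), mixedPowers_one _ _ n⟩
  have hy_pow (n : ℕ) : y * (x * y) ^ n ∈ S := by
    have hexpand : y * (x * y) ^ n =
        a • (x * y) ^ n + c • (x * y) ^ (n + 1) - x * (x * y) ^ n := by
      simp only [Algebra.smul_def] at hxy ⊢
      linear_combination (x * y) ^ n * hxy
    rw [hexpand]
    exact S.sub_mem (S.add_mem (S.smul_mem a (hpow n)) (S.smul_mem c (hpow (n + 1)))) (hmulpow n)
  have hx_mulpow (n : ℕ) : x * (x * (x * y) ^ n) ∈ S := by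
    have hexpand : x * (x * (x * y) ^ n) =
        a • (x * (x * y) ^ n) + c • (x * (x * y) ^ (n + 1)) - (x * y) ^ (n + 1) := by
      simp only [Algebra.smul_def] at hxy ⊢
      linear_combination x * (x * y) ^ n * hxy
    rw [hexpand]
    exact S.sub_mem (S.add_mem (S.smul_mem a (hmulpow n)) (S.smul_mem c (hmulpow (n + 1))))
      (hpow (n + 1))
  refine adjoin_le_of_mul_mem (by simpa only [pow_zero] using hpow 0) ?_
  rintro t (rfl | rfl) <;> refine mul_mem_span_range ?_ <;> rintro ⟨j, n⟩ <;> fin_cases j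
  · simpa [mixedPowers] using hmulpow n
  · simpa [mixedPowers] using hx_mulpow n
  · simpa [mixedPowers] using hy_pow n
  · simpa [mixedPowers, pow_succ', mul_left_comm, mul_assoc] using hpow (n + 1)

lemma linearIndependent_mixedPowers_of_aeval {R A : Type*} [CommRing R] [Ring A] [Algebra R A]
    {h b : A}
    (hzero : ∀ p q : R[X], aeval b p + h * aeval b q = 0 → p = 0 ∧ q = 0) :
    LinearIndependent R (mixedPowers h b) := by
  let monomialBasis := (Pi.basis fun _ : Fin 2 => basisMonomials R).reindex
    (Equiv.sigmaEquivProd (Fin 2) ℕ)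
  let combine : (Fin 2 → R[X]) →ₗ[R] A :=
    ∑ j : Fin 2, LinearMap.mulLeft R (h ^ (j : ℕ)) ∘ₗ (aeval b).toLinearMap ∘ₗ LinearMap.proj j
  have hker : LinearMap.ker combine = ⊥ := by
    refine LinearMap.ker_eq_bot'.2 fun p hp => ?_
    obtain ⟨hp₀, hp₁⟩ := hzero (p 0) (p 1) (by simpa [combine] using hp)
    ext1 j
    fin_cases j
    exacts [hp₀, hp₁]
  have hfamily : combine ∘ monomialBasis = mixedPowers h b := by
    ext ⟨j, n⟩
    fin_cases j <;> simp [combine, monomialBasis, mixedPowers]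
  exact hfamily ▸ monomialBasis.linearIndependent.map' combine hker

lemma linearIndependent_mixedPowers_of_comp_eq {X K : Type*} [CommRing K] [IsDomain K]
    {h b : X → K} {σ : X → X} (hσ : b ∘ σ = b) (hinf : (b '' {x | h (σ x) ≠ h x}).Infinite) :
    LinearIndependent K (mixedPowers h b) := by
  refine linearIndependent_mixedPowers_of_aeval fun p q hpq => ?_
  have heval (x : X) : p.eval (b x) + h x * q.eval (b x) = 0 := by
    simpa [aeval_fn_apply] using congrFun hpq x
  have hq : q = 0 := by
    refine q.eq_zero_of_infinite_isRoot (hinf.mono ?_)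
    rintro _ ⟨x, hx, rfl⟩
    have heval_σ := heval (σ x)
    rw [← Function.comp_apply (f := b), hσ] at heval_σ
    have hsub : (h (σ x) - h x) * q.eval (b x) = 0 := by linear_combination heval_σ - heval x
    exact (mul_eq_zero.1 hsub).resolve_left (sub_ne_zero.2 hx)
  have hp : p = 0 := by
    refine p.eq_zero_of_infinite_isRoot (hinf.mono ?_)
    rintro _ ⟨x, -, rfl⟩
    simpa [hq] using heval x
  exact ⟨hp, hq⟩

end MixedPowers

section Mobius

variable {z₀ z w : ℂ}

lemma re_one_sub_conj_mul_pos (hz₀ : z₀ ∈ unitDisk) (hz : z ∈ Metric.closedBall 0 1) :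
    0 < (1 - (starRingEnd ℂ) z₀ * z).re := by
  have hnorm : ‖(starRingEnd ℂ) z₀ * z‖ < 1 := by
    rw [norm_mul, RCLike.norm_conj]
    exact mul_lt_one_of_nonneg_of_lt_one_left (norm_nonneg _) (mem_ball_zero_iff.1 hz₀)
      (mem_closedBall_zero_iff.1 hz)
  rw [Complex.sub_re, Complex.one_re]
  linarith [Complex.re_le_norm ((starRingEnd ℂ) z₀ * z)]

lemma one_sub_conj_mul_ne_zero (hz₀ : z₀ ∈ unitDisk) (hz : z ∈ Metric.closedBall 0 1) :
    1 - (starRingEnd ℂ) z₀ * z ≠ 0 := fun h =>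
  (re_one_sub_conj_mul_pos hz₀ hz).ne' (by rw [h, Complex.zero_re])

lemma unitDisk_subset_closedBall : unitDisk ⊆ Metric.closedBall 0 1 := Metric.ball_subset_closedBall

lemma analyticOnNhd_mobius (hz₀ : z₀ ∈ unitDisk) :
    AnalyticOnNhd ℂ (mobius z₀) (Metric.closedBall 0 1) := fun _ hz =>
  (analyticAt_const.sub analyticAt_id).div
    (analyticAt_const.sub (analyticAt_const.mul analyticAt_id)) (one_sub_conj_mul_ne_zero hz₀ hz)

lemma norm_one_sub_conj_mul_sq_sub_norm_sub_sq (z₀ z : ℂ) :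
    ‖1 - (starRingEnd ℂ) z₀ * z‖ ^ 2 - ‖z₀ - z‖ ^ 2 = (1 - ‖z₀‖ ^ 2) * (1 - ‖z‖ ^ 2) := by
  simp only [← Complex.normSq_eq_norm_sq, Complex.normSq_apply, Complex.sub_re, Complex.sub_im,
    Complex.mul_re, Complex.mul_im, Complex.conj_re, Complex.conj_im, Complex.one_re,
    Complex.one_im]
  ring

lemma mapsTo_mobius (hz₀ : z₀ ∈ unitDisk) : Set.MapsTo (mobius z₀) unitDisk unitDisk := by
  intro z hz
  have hden := one_sub_conj_mul_ne_zero hz₀ (unitDisk_subset_closedBall hz)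
  rw [unitDisk, mem_ball_zero_iff] at hz₀ hz ⊢
  rw [mobius, norm_div, div_lt_one (norm_pos_iff.2 hden)]
  refine lt_of_pow_lt_pow_left₀ 2 (norm_nonneg _) (sub_pos.1 ?_)
  rw [norm_one_sub_conj_mul_sq_sub_norm_sub_sq]
  exact mul_pos (sub_pos.2 (pow_lt_one₀ (norm_nonneg _) hz₀ two_ne_zero))
    (sub_pos.2 (pow_lt_one₀ (norm_nonneg _) hz two_ne_zero))

lemma add_mobius (hz₀ : z₀ ∈ unitDisk) (hz : z ∈ unitDisk) :
    z + mobius z₀ z = z₀ + (starRingEnd ℂ) z₀ * (z * mobius z₀ z) := by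
  have hmul : mobius z₀ z * (1 - (starRingEnd ℂ) z₀ * z) = z₀ - z :=
    div_mul_cancel₀ _ (one_sub_conj_mul_ne_zero hz₀ (unitDisk_subset_closedBall hz))
  linear_combination hmul

lemma mobius_mobius (hz₀ : z₀ ∈ unitDisk) (hz : z ∈ unitDisk) : mobius z₀ (mobius z₀ z) = z := by
  have hden := one_sub_conj_mul_ne_zero hz₀ (unitDisk_subset_closedBall (mapsTo_mobius hz₀ hz))
  rw [mobius, div_eq_iff hden]
  linear_combination -add_mobius hz₀ hz

lemma eq_or_eq_mobius_of_mul_mobius_eq (hz₀ : z₀ ∈ unitDisk) (hz : z ∈ unitDisk)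
    (hw : w ∈ unitDisk) (h : w * mobius z₀ w = z * mobius z₀ z) : w = z ∨ w = mobius z₀ z := by
  have hfactor : (w - z) * (w - mobius z₀ z) = 0 := by
    linear_combination w * add_mobius hz₀ hw - w * add_mobius hz₀ hz +
      (w * (starRingEnd ℂ) z₀ - 1) * h
  simpa only [mul_eq_zero, sub_eq_zero] using hfactor

lemma eq_of_mobius_eq_self (hz₀ : z₀ ∈ unitDisk) (hz : z ∈ unitDisk) (hw : w ∈ unitDisk)
    (hfz : mobius z₀ z = z) (hfw : mobius z₀ w = w) : z = w := by
  have hz_rel := add_mobius hz₀ hz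
  have hw_rel := add_mobius hz₀ hw
  rw [hfz] at hz_rel
  rw [hfw] at hw_rel
  have hfactor : (z - w) * ((1 - (starRingEnd ℂ) z₀ * z) + (1 - (starRingEnd ℂ) z₀ * w)) = 0 := by
    linear_combination hz_rel - hw_rel
  refine sub_eq_zero.1 ((mul_eq_zero.1 hfactor).resolve_right fun hsum => ?_)
  have hre := congrArg Complex.re hsum
  rw [Complex.add_re, Complex.zero_re] at hre
  linarith [re_one_sub_conj_mul_pos hz₀ (unitDisk_subset_closedBall hz),
    re_one_sub_conj_mul_pos hz₀ (unitDisk_subset_closedBall hw)]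

lemma infinite_setOf_mobius_ne_self (hz₀ : z₀ ∈ unitDisk) :
    {z ∈ unitDisk | mobius z₀ z ≠ z}.Infinite := by
  have hdisk : unitDisk.Infinite := infinite_of_mem_nhds 0 (Metric.ball_mem_nhds 0 one_pos)
  have hfixed : {z ∈ unitDisk | mobius z₀ z = z}.Subsingleton := fun _ hz _ hw =>
    eq_of_mobius_eq_self hz₀ hz.1 hw.1 hz.2 hw.2
  exact (hdisk.sdiff hfixed.finite).mono fun z hz => ⟨hz.1, fun h => hz.2 ⟨hz.1, h⟩⟩

lemma infinite_image_mul_mobius (hz₀ : z₀ ∈ unitDisk) {s : Set ℂ} (hs : s ⊆ unitDisk)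
    (hinf : s.Infinite) : ((fun z => z * mobius z₀ z) '' s).Infinite := by
  refine fun himage => hinf (.of_finite_fibers _ himage ?_)
  rintro _ ⟨z, hz, rfl⟩
  refine (Set.toFinite {z, mobius z₀ z}).subset fun w hw => ?_
  exact eq_or_eq_mobius_of_mul_mobius_eq hz₀ (hs hz) (hs hw.1) hw.2

end Mobius

section DiskFunctions

variable {z₀ : ℂ}

lemma restrict_id_add_restrict_mobius (hz₀ : z₀ ∈ unitDisk) :
    unitDisk.domRestrict id + unitDisk.domRestrict (mobius z₀) = algebraMap ℂ (unitDisk → ℂ) z₀ +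
      (starRingEnd ℂ) z₀ • (unitDisk.domRestrict id * unitDisk.domRestrict (mobius z₀)) :=
  funext fun z => add_mobius hz₀ z.2

lemma linearIndependent_mixedPowers_restrict_id (hz₀ : z₀ ∈ unitDisk) :
    LinearIndependent ℂ (mixedPowers (unitDisk.domRestrict id)
      (unitDisk.domRestrict id * unitDisk.domRestrict (mobius z₀))) := by
  refine linearIndependent_mixedPowers_of_comp_eq (σ := (mapsTo_mobius hz₀).restrict) ?_ ?_
  · ext z
    change mobius z₀ z * mobius z₀ (mobius z₀ z) = z * mobius z₀ z
    rw [mobius_mobius hz₀ z.2, mul_comm]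
  · refine (infinite_image_mul_mobius hz₀ (Set.sep_subset _ _)
      (infinite_setOf_mobius_ne_self hz₀)).mono ?_
    rintro _ ⟨z, ⟨hz, hne⟩, rfl⟩
    exact ⟨⟨z, hz⟩, hne, rfl⟩

lemma linearIndependent_mixedPowers_restrict_mobius (hz₀ : z₀ ∈ unitDisk) :
    LinearIndependent ℂ (mixedPowers (unitDisk.domRestrict (mobius z₀))
      (unitDisk.domRestrict id * unitDisk.domRestrict (mobius z₀))) := by
  let σ : unitDisk → unitDisk := (mapsTo_mobius hz₀).restrict
  have hσ : Function.Involutive σ := fun z => Subtype.ext (mobius_mobius hz₀ z.2)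
  have hfamily : mixedPowers (unitDisk.domRestrict (mobius z₀))
      (unitDisk.domRestrict id * unitDisk.domRestrict (mobius z₀)) = LinearMap.funLeft ℂ ℂ σ ∘
        mixedPowers (unitDisk.domRestrict id)
          (unitDisk.domRestrict id * unitDisk.domRestrict (mobius z₀)) := by
    ext i z
    change mobius z₀ z ^ (i.1 : ℕ) * (z * mobius z₀ z) ^ i.2 =
      mobius z₀ z ^ (i.1 : ℕ) * (mobius z₀ z * mobius z₀ (mobius z₀ z)) ^ i.2
    rw [mobius_mobius hz₀ z.2, mul_comm (z : ℂ)]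
  rw [hfamily]
  exact (linearIndependent_mixedPowers_restrict_id hz₀).map' _
    (LinearMap.ker_eq_bot.2 (LinearMap.funLeft_injective_of_surjective ℂ ℂ σ hσ.surjective))

lemma restrict_id_pow_mem_span_mixedPowers_id (hz₀ : z₀ ∈ unitDisk) (k : ℕ) :
    unitDisk.domRestrict id ^ k ∈ Submodule.span ℂ (Set.range (mixedPowers (unitDisk.domRestrict id)
      (unitDisk.domRestrict id * unitDisk.domRestrict (mobius z₀)))) :=
  adjoin_pair_le_span_mixedPowers (restrict_id_add_restrict_mobius hz₀)
    ((Subalgebra.mem_toSubmodule _).2 (pow_mem (Algebra.subset_adjoin (Set.mem_insert _ _)) k))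

lemma restrict_id_pow_mem_span_mixedPowers_mobius (hz₀ : z₀ ∈ unitDisk) (k : ℕ) :
    unitDisk.domRestrict id ^ k ∈ Submodule.span ℂ (Set.range (mixedPowers
      (unitDisk.domRestrict (mobius z₀))
      (unitDisk.domRestrict id * unitDisk.domRestrict (mobius z₀)))) := by
  have hrel := restrict_id_add_restrict_mobius hz₀
  rw [add_comm, mul_comm (unitDisk.domRestrict id)] at hrel
  rw [mul_comm (unitDisk.domRestrict id)]
  exact adjoin_pair_le_span_mixedPowers hrel
    ((Subalgebra.mem_toSubmodule _).2
      (pow_mem (Algebra.subset_adjoin (Set.mem_insert_of_mem _ (Set.mem_singleton _))) k))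

end DiskFunctions

theorem exists_repFun_eq_mixedPowers_total_linearIndependent {β : ℕ → ℝ}
    (hβ : IsSubexponentialWeight β) {h b : ℂ → ℂ}
    (hh : AnalyticOnNhd ℂ h (Metric.closedBall 0 1))
    (hb : AnalyticOnNhd ℂ b (Metric.closedBall 0 1))
    (hind : LinearIndependent ℂ (mixedPowers (unitDisk.domRestrict h) (unitDisk.domRestrict b)))
    (hpow : ∀ k : ℕ, unitDisk.domRestrict id ^ k ∈
      Submodule.span ℂ
        (Set.range (mixedPowers (unitDisk.domRestrict h) (unitDisk.domRestrict b)))) :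
    ∃ c : Fin 2 × ℕ → H2,
      (∀ n : ℕ, ∀ z ∈ unitDisk, repFun β (c (0, n)) z = b z ^ n) ∧
      (∀ n : ℕ, ∀ z ∈ unitDisk, repFun β (c (1, n)) z = h z * b z ^ n) ∧
      (Submodule.span ℂ (Set.range c)).topologicalClosure = ⊤ ∧
      LinearIndependent ℂ c := by
  have hanalytic (i : Fin 2 × ℕ) :
      AnalyticOnNhd ℂ (mixedPowers h b i) (Metric.closedBall 0 1) :=
    (hh.pow (i.1 : ℕ)).mul (hb.pow i.2)
  obtain ⟨c, hc, htotal, hcind⟩ :=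
    exists_repFun_eq_total_linearIndependent hβ hanalytic hind hpow
  refine ⟨c, fun n z hz => ?_, fun n z hz => ?_, htotal, hcind⟩
  · exact (hc (0, n) z hz).trans (mixedPowers_zero (h z) (b z) n)
  · exact (hc (1, n) z hz).trans (mixedPowers_one (h z) (b z) n)

theorem statement9_general {β : ℕ → ℝ} (hβ : IsSubexponentialWeight β) {z₀ : ℂ}
    (hz₀ : z₀ ∈ unitDisk) :
    (∃ c : Fin 2 × ℕ → H2,
      (∀ n : ℕ, ∀ z ∈ unitDisk, repFun β (c (0, n)) z = (z * mobius z₀ z) ^ n) ∧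
      (∀ n : ℕ, ∀ z ∈ unitDisk, repFun β (c (1, n)) z = z * (z * mobius z₀ z) ^ n) ∧
      (Submodule.span ℂ (Set.range c)).topologicalClosure = ⊤ ∧
      LinearIndependent ℂ c) ∧
    (∃ d : Fin 2 × ℕ → H2,
      (∀ n : ℕ, ∀ z ∈ unitDisk, repFun β (d (0, n)) z = (z * mobius z₀ z) ^ n) ∧
      (∀ n : ℕ, ∀ z ∈ unitDisk, repFun β (d (1, n)) z = mobius z₀ z * (z * mobius z₀ z) ^ n) ∧
      (Submodule.span ℂ (Set.range d)).topologicalClosure = ⊤ ∧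
      LinearIndependent ℂ d) := by
  have hmobius := analyticOnNhd_mobius hz₀
  have hproduct := analyticOnNhd_id.mul hmobius
  exact ⟨exists_repFun_eq_mixedPowers_total_linearIndependent hβ analyticOnNhd_id hproduct
      (linearIndependent_mixedPowers_restrict_id hz₀)
      (restrict_id_pow_mem_span_mixedPowers_id hz₀),
    exists_repFun_eq_mixedPowers_total_linearIndependent hβ hmobius hproduct
      (linearIndependent_mixedPowers_restrict_mobius hz₀)
      (restrict_id_pow_mem_span_mixedPowers_mobius hz₀)⟩

/-- Let `H²_β` come from a weight sequence `w_k → 1`, let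
`z₀ ∈ 𝔻 \ {0}`, `φ_{z₀}(z) = (z₀ - z)/(1 - conj z₀ · z)` and `B = z·φ_{z₀}`.  Then both
families `{B^n, z·B^n}` and `{B^n, φ_{z₀}·B^n}` are total and finitely linearly
independent in `H²_β`. -/
theorem statement9 (w : ℕ → ℝ) (hpos : ∀ k, 1 ≤ k → 0 < w k)
    (hlim : Tendsto w atTop (nhds 1))
    (z₀ : ℂ) (hz₀ : z₀ ∈ unitDisk) (hz₀0 : z₀ ≠ 0) :
    (∃ c : Fin 2 × ℕ → H2,
      (∀ n : ℕ, ∀ z ∈ unitDisk,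
        repFun (betaSeq w) (c (0, n)) z = (z * mobius z₀ z) ^ n) ∧
      (∀ n : ℕ, ∀ z ∈ unitDisk,
        repFun (betaSeq w) (c (1, n)) z = z * (z * mobius z₀ z) ^ n) ∧
      (Submodule.span ℂ (Set.range c)).topologicalClosure = ⊤ ∧
      LinearIndependent ℂ c) ∧
    (∃ d : Fin 2 × ℕ → H2,
      (∀ n : ℕ, ∀ z ∈ unitDisk,
        repFun (betaSeq w) (d (0, n)) z = (z * mobius z₀ z) ^ n) ∧
      (∀ n : ℕ, ∀ z ∈ unitDisk,
        repFun (betaSeq w) (d (1, n)) z = mobius z₀ z * (z * mobius z₀ z) ^ n) ∧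
      (Submodule.span ℂ (Set.range d)).topologicalClosure = ⊤ ∧
      LinearIndependent ℂ d) :=
  statement9_general (isSubexponentialWeight_betaSeq hpos hlim) hz₀
end
end
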